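/- arXiv:1103.3693 — 4 statements merged into one kernel-verified Lean document; each statement's English description precedes it below -/
import Mathlib

section
/- A generalised multi-clause-set F admits a decomposition F = F_1 + … + F_m (multiset sum, m ≥ 0) together with pairwise distinct variables v_1, …, v_m such that for each i every clause C of F_i satisfies v_i ∈ var(C) and |D_{v_i}| > c(F_i), if and only if the bipartite graph B(F) has a matching covering all clause-nodes (i.e., if and only if F is matching satisfiable). -/
open scoped Classical

namespace GCLS

variable {V α : Type} [DecidableEq V] [DecidableEq α]

/-- A finite "functional" set of (variable, value) pairs, with values inside the
given domains `D`; used both for clauses and for partial assignments. -/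
def FinFn (D : V → Finset α) : Type :=
  { s : Finset (V × α) // (∀ p ∈ s, p.2 ∈ D p.1) ∧
      ∀ p ∈ s, ∀ q ∈ s, p.1 = q.1 → p = q }

variable {D : V → Finset α}

instance : DecidableEq (FinFn D) :=
  fun a b => decidable_of_iff (a.1 = b.1) Subtype.ext_iff.symm

namespace FinFn

/-- The set of variables occurring. -/
def vars (s : FinFn D) : Finset V := s.1.image Prod.fst

/-- Restriction to the pairs whose variable lies in `W`. -/
def restrictVars (s : FinFn D) (W : Finset V) : FinFn D :=
  ⟨s.1.filter (fun p => p.1 ∈ W),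
   fun p hp => s.2.1 p (Finset.mem_filter.mp hp).1,
   fun p hp q hq h =>
     s.2.2 p (Finset.mem_filter.mp hp).1 q (Finset.mem_filter.mp hq).1 h⟩

/-- Removal of a set of pairs. -/
def sdiff (s : FinFn D) (t : Finset (V × α)) : FinFn D :=
  ⟨s.1 \ t,
   fun p hp => s.2.1 p (Finset.mem_sdiff.mp hp).1,
   fun p hp q hq h =>
     s.2.2 p (Finset.mem_sdiff.mp hp).1 q (Finset.mem_sdiff.mp hq).1 h⟩

end FinFn

/-- Clauses: finite sets of literals `(v,ε)` (meaning "v ≠ ε"), at most one literal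
per variable, values inside the domains. -/
abbrev Clause (D : V → Finset α) := FinFn D

/-- Partial assignments: finitely many variables get values inside their domains. -/
abbrev PAssign (D : V → Finset α) := FinFn D

/-- `φ` satisfies the literal `(v,ε)` (i.e. "v ≠ ε"): `v` is assigned a value ≠ `ε`. -/
def SatLit (φ : PAssign D) (l : V × α) : Prop :=
  ∃ ε, (l.1, ε) ∈ φ.1 ∧ ε ≠ l.2

/-- `φ` satisfies a clause iff it satisfies some literal of it. -/
def SatClause (φ : PAssign D) (C : Clause D) : Prop :=
  ∃ l ∈ C.1, SatLit φ l

/-- The clause obtained from `C` by deleting all literals falsified by `φ`. -/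
def Clause.restrict (φ : PAssign D) (C : Clause D) : Clause D :=
  FinFn.sdiff C φ.1

/-- The operation `φ * F` on multi-clause-sets: remove all clauses satisfied by `φ`
and delete all falsified literals from the remaining clauses. -/
noncomputable def applyM (φ : PAssign D) (F : Multiset (Clause D)) : Multiset (Clause D) :=
  (F.filter (fun C => ¬ SatClause φ C)).map (Clause.restrict φ)

/-- The operation `φ * F` on clause-sets (with contraction of equal clauses). -/
noncomputable def applyF (φ : PAssign D) (F : Finset (Clause D)) : Finset (Clause D) :=
  (F.filter (fun C => ¬ SatClause φ C)).image (Clause.restrict φ)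

/-- Satisfiability: some partial assignment satisfies all clauses. -/
def Sat (F : Multiset (Clause D)) : Prop :=
  ∃ φ : PAssign D, applyM φ F = 0

/-- Minimal unsatisfiability of a clause-set. -/
def MinUnsat (F : Finset (Clause D)) : Prop :=
  ¬ Sat F.val ∧ ∀ F' ⊂ F, Sat F'.val

/-- The variables of a multi-clause-set. -/
def mvars (F : Multiset (Clause D)) : Finset V := F.toFinset.sup FinFn.vars

/-- The deficiency `δ(F) = c(F) - Σ_{v ∈ var(F)} (|D_v| - 1)`. -/
def delta (F : Multiset (Clause D)) : ℤ :=
  (Multiset.card F : ℤ) - ∑ v ∈ mvars F, ((D v).card - 1 : ℤ)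

lemma powerset_toFinset_nonempty (F : Multiset (Clause D)) :
    F.powerset.toFinset.Nonempty :=
  ⟨0, by simp⟩

/-- The maximal deficiency `δ*(F) = max {δ(F') : F' ≤ F}`. -/
noncomputable def deltaStar (F : Multiset (Clause D)) : ℤ :=
  F.powerset.toFinset.sup' (powerset_toFinset_nonempty F) delta

/-- A tight sub-multi-clause-set: `F' ≤ F` with `δ(F') = δ*(F)`. -/
noncomputable def Tight (F F' : Multiset (Clause D)) : Prop :=
  F' ≤ F ∧ delta F' = deltaStar F

/-- `F` is matching satisfiable: the clause-variable graph `B(F)` has a matching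
covering all clause-nodes.  Such a matching is encoded as a multiset `P` of pairs
(clause-occurrence, variable-node), where the variable-nodes `(v,k)`,
`k < |D v| - 1`, are the copies of the variable `v`; the matching covers each
clause-occurrence exactly once (`P.map Prod.fst = F`), uses pairwise distinct
variable-nodes, and respects adjacency in `B(F)`. -/
def MatchingSat (F : Multiset (Clause D)) : Prop :=
  ∃ P : Multiset (Clause D × (V × ℕ)),
    P.map Prod.fst = F ∧ (P.map Prod.snd).Nodup ∧
    ∀ p ∈ P, p.2.1 ∈ FinFn.vars p.1 ∧ p.2.2 < (D p.2.1).card - 1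

/-- The edge between clause `C` and the copies of variable `v` is retained in
`B_φ(F)`: the literal of `C` with variable `v` is satisfied by `φ`. -/
def EdgeSat (φ : PAssign D) (C : Clause D) (v : V) : Prop :=
  ∃ ε, (v, ε) ∈ C.1 ∧ SatLit φ (v, ε)

/-- `φ` is matching-satisfying for `F`: `B_φ(F)` has a matching covering all
clause-nodes. -/
def MatchingSatisfying (φ : PAssign D) (F : Multiset (Clause D)) : Prop :=
  ∃ P : Multiset (Clause D × (V × ℕ)),
    P.map Prod.fst = F ∧ (P.map Prod.snd).Nodup ∧
    ∀ p ∈ P, p.2.2 < (D p.2.1).card - 1 ∧ EdgeSat φ p.1 p.2.1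

/-- The maximum size of a matching in `B(F)`. -/
noncomputable def nu (F : Multiset (Clause D)) : ℕ :=
  sSup { k | ∃ P : Multiset (Clause D × (V × ℕ)),
    P.map Prod.fst ≤ F ∧ (P.map Prod.snd).Nodup ∧
    (∀ p ∈ P, p.2.1 ∈ FinFn.vars p.1 ∧ p.2.2 < (D p.2.1).card - 1) ∧
    Multiset.card P = k }

/-- The maximum size of a matching in `B_φ(F)`. -/
noncomputable def nuSub (φ : PAssign D) (F : Multiset (Clause D)) : ℕ :=
  sSup { k | ∃ P : Multiset (Clause D × (V × ℕ)),
    P.map Prod.fst ≤ F ∧ (P.map Prod.snd).Nodup ∧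
    (∀ p ∈ P, p.2.2 < (D p.2.1).card - 1 ∧ EdgeSat φ p.1 p.2.1) ∧
    Multiset.card P = k }

/-- `φ` is matching-maximum for `F`. -/
noncomputable def MatchingMaximum (φ : PAssign D) (F : Multiset (Clause D)) : Prop :=
  nuSub φ F = nu F

/-- `φ` is an autarky for `F`: every clause touched by `φ` is satisfied by `φ`. -/
def IsAutarky (φ : PAssign D) (F : Multiset (Clause D)) : Prop :=
  ∀ C ∈ F, (FinFn.vars C ∩ FinFn.vars φ).Nonempty → SatClause φ C

/-- `F` is lean: it has no non-trivial autarky. -/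
def IsLean (F : Multiset (Clause D)) : Prop :=
  ¬ ∃ φ : PAssign D, IsAutarky φ F ∧ (FinFn.vars φ ∩ mvars F).Nonempty

/-- The sub-multi-clause-set of clauses touched by the variables in `W`. -/
noncomputable def touchedBy (F : Multiset (Clause D)) (W : Finset V) : Multiset (Clause D) :=
  F.filter (fun C => (FinFn.vars C ∩ W).Nonempty)

/-- The restriction `F[W]`: keep the clauses touching `W` and delete from them all
literals whose variable is not in `W`. -/
noncomputable def restrictTo (F : Multiset (Clause D)) (W : Finset V) : Multiset (Clause D) :=
  (touchedBy F W).map (fun C => FinFn.restrictVars C W)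

/-- `φ` is a matching autarky for `F`: `φ` is matching-satisfying for the
sub-multi-clause-set of clauses touched by `φ`. -/
noncomputable def IsMatchingAutarky (φ : PAssign D) (F : Multiset (Clause D)) : Prop :=
  MatchingSatisfying φ (touchedBy F (FinFn.vars φ))

/-- `F` is matching lean: no non-trivial matching autarky. -/
noncomputable def MatchingLean (F : Multiset (Clause D)) : Prop :=
  ¬ ∃ φ : PAssign D, IsMatchingAutarky φ F ∧ (FinFn.vars φ ∩ mvars F).Nonempty

lemma surp_nonempty {F : Multiset (Clause D)} (h : (mvars F).Nonempty) :
    ((mvars F).powerset.erase ∅).Nonempty := by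
  obtain ⟨v, hv⟩ := h
  refine ⟨{v}, ?_⟩
  simp [Finset.mem_erase, Finset.singleton_subset_iff, hv]

/-- The surplus `surp(F) = min {δ(F[W]) : ∅ ≠ W ⊆ var(F)}` (and `0` if `var(F) = ∅`). -/
noncomputable def surp (F : Multiset (Clause D)) : ℤ :=
  if h : (mvars F).Nonempty then
    ((mvars F).powerset.erase ∅).inf' (surp_nonempty h)
      (fun W => delta (restrictTo F W))
  else 0

/-- The number of occurrences of the literal `l` in `F`. -/
noncomputable def litCount (F : Multiset (Clause D)) (l : V × α) : ℕ :=
  Multiset.card (F.filter (fun C => l ∈ C.1))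

/-- The number of occurrences `#_v(F)` of the variable `v` in `F`. -/
noncomputable def varCount (F : Multiset (Clause D)) (v : V) : ℕ :=
  ∑ ε ∈ D v, litCount F (v, ε)

/-- The partial assignment `⟨v → ε⟩`. -/
def single (v : V) (ε : α) (hε : ε ∈ D v) : PAssign D :=
  ⟨{(v, ε)}, by
    refine ⟨?_, ?_⟩
    · intro p hp
      rw [Finset.mem_singleton] at hp
      subst hp; exact hε
    · intro p hp q hq _
      rw [Finset.mem_singleton] at hp hq
      subst hp; subst hq; rfl⟩

/-- Composition `φ ∘ ψ` of partial assignments: domain is the union of the domains,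
`ψ` taking precedence. -/
def comp (φ ψ : PAssign D) : PAssign D :=
  ⟨ψ.1 ∪ φ.1.filter (fun p => p.1 ∉ FinFn.vars ψ), by
    constructor
    · intro p hp
      rcases Finset.mem_union.mp hp with h | h
      · exact ψ.2.1 p h
      · exact φ.2.1 p (Finset.mem_filter.mp h).1
    · intro p hp q hq hpq
      rcases Finset.mem_union.mp hp with h1 | h1 <;>
        rcases Finset.mem_union.mp hq with h2 | h2
      · exact ψ.2.2 p h1 q h2 hpq
      · exact absurd (hpq ▸ Finset.mem_image_of_mem Prod.fst h1)
          (Finset.mem_filter.mp h2).2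
      · exact absurd (hpq.symm ▸ Finset.mem_image_of_mem Prod.fst h2)
          (Finset.mem_filter.mp h1).2
      · exact φ.2.2 p (Finset.mem_filter.mp h1).1 q (Finset.mem_filter.mp h2).1 hpq⟩

/-- Two clauses clash (in some variable). -/
def Clash (C C' : Clause D) : Prop :=
  ∃ v ε ε', (v, ε) ∈ C.1 ∧ (v, ε') ∈ C'.1 ∧ ε ≠ ε'

/-- The number of variables in which two clauses clash. -/
noncomputable def clashCount (C C' : Clause D) : ℕ :=
  ((FinFn.vars C).filter
    (fun v => ∃ ε ε', (v, ε) ∈ C.1 ∧ (v, ε') ∈ C'.1 ∧ ε ≠ ε')).card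

/-- Hitting clause-sets: every two distinct clauses clash. -/
def Hitting (F : Finset (Clause D)) : Prop :=
  ∀ C ∈ F, ∀ C' ∈ F, C ≠ C' → Clash C C'

/-- Boolean clauses over the boolean variables `V × α` (one boolean variable per
generalised literal; the value `false` gives the positive boolean literal). -/
abbrev BClause (V α : Type) :=
  Clause (fun _ : V × α => (Finset.univ : Finset Bool))

/-- The direct translation of a single clause: each literal `(v,ε)` is replaced by
the positive boolean literal of the boolean variable `(v,ε)`. -/
def dirClause (C : Clause D) : BClause V α :=
  ⟨C.1.image (fun p => (p, false)), by
    constructor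
    · intro p _; exact Finset.mem_univ _
    · intro p hp q hq h
      simp only [Finset.mem_image] at hp hq
      obtain ⟨a, -, rfl⟩ := hp
      obtain ⟨b, -, rfl⟩ := hq
      exact congrArg (fun x => (x, false)) h⟩

/-- The ALO-clause for a variable `v`: the negative boolean literals of the boolean
variables `(v,ε)` for `ε ∈ D v`. -/
def aloClause (D : V → Finset α) (v : V) : BClause V α :=
  ⟨(D v).image (fun ε => ((v, ε), true)), by
    constructor
    · intro p _; exact Finset.mem_univ _
    · intro p hp q hq h
      simp only [Finset.mem_image] at hp hq
      obtain ⟨a, -, rfl⟩ := hp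
      obtain ⟨b, -, rfl⟩ := hq
      exact congrArg (fun x => (x, true)) h⟩

/-- The direct translation `Γ(F)`: the translated clauses together with the
ALO-clauses for all occurring variables. -/
noncomputable def dirTrans (F : Finset (Clause D)) : Finset (BClause V α) :=
  F.image dirClause ∪ (mvars F.val).image (aloClause D)

/-!
Both sides say that each clause-occurrence of `F` can be sent to one of its variables so that every
variable `v` is used at most `|D v| - 1` times; equivalently, `F` is related by `v ∈ var(C)`, in
the sense of `Multiset.Rel`, to a multiset `S` of variables with these multiplicity bounds.
Numbering the occurrences of each variable in `S` turns it into a set of variable-nodes, and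
collecting the clauses sent to the same variable gives the parts of the decomposition.
-/

section Relators

variable {β ι : Type*} {r : β → ι → Prop}

theorem rel_iff_exists_map_fst_map_snd {s : Multiset β} {t : Multiset ι} :
    Multiset.Rel r s t ↔ ∃ P : Multiset (β × ι),
      P.map Prod.fst = s ∧ P.map Prod.snd = t ∧ ∀ p ∈ P, r p.1 p.2 := by
  constructor
  · intro h
    induction h with
    | zero => exact ⟨0, by simp⟩
    | @cons a b s t hab _ ih =>
      obtain ⟨P, rfl, rfl, hP⟩ := ih
      exact ⟨(a, b) ::ₘ P, by simp, by simp, Multiset.forall_mem_cons.2 ⟨hab, hP⟩⟩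
  · rintro ⟨P, rfl, rfl, hP⟩
    exact Multiset.rel_map.2 (Multiset.rel_refl_of_refl_on hP)

theorem rel_replicate_right_iff {s : Multiset β} {v : ι} {n : ℕ} :
    Multiset.Rel r s (Multiset.replicate n v) ↔ s.card = n ∧ ∀ x ∈ s, r x v := by
  constructor
  · intro h
    refine ⟨(Multiset.card_eq_card_of_rel h).trans (Multiset.card_replicate n v), fun x hx ↦ ?_⟩
    obtain ⟨w, hw, hxw⟩ := Multiset.exists_mem_of_rel_of_mem h hx
    exact Multiset.eq_of_mem_replicate hw ▸ hxw
  · rintro ⟨rfl, h⟩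
    rw [← Multiset.map_const', Multiset.rel_map_right]
    exact Multiset.rel_refl_of_refl_on h

theorem rel_sum_right_iff {κ : Type*} {I : Finset κ} {s : Multiset β} {t : κ → Multiset ι} :
    Multiset.Rel r s (∑ i ∈ I, t i) ↔
      ∃ f : κ → Multiset β, ∑ i ∈ I, f i = s ∧ ∀ i ∈ I, Multiset.Rel r (f i) (t i) := by
  classical
  induction I using Finset.induction_on generalizing s with
  | empty => simp [eq_comm]
  | insert a I ha ih =>
    simp only [Finset.sum_insert ha, Multiset.rel_add_right, Finset.forall_mem_insert]
    constructor
    · rintro ⟨s₁, s₂, h₁, h₂, rfl⟩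
      obtain ⟨f, rfl, hf⟩ := ih.1 h₂
      have update_eq : ∀ i ∈ I, Function.update f a s₁ i = f i := fun i hi ↦
        Function.update_of_ne (ne_of_mem_of_not_mem hi ha) s₁ f
      refine ⟨Function.update f a s₁, ?_, ?_, fun i hi ↦ ?_⟩
      · rw [Function.update_self, Finset.sum_congr rfl update_eq]
      · rwa [Function.update_self]
      · rw [update_eq i hi]
        exact hf i hi
    · rintro ⟨f, rfl, hfa, hfI⟩
      exact ⟨f a, _, hfa, ih.2 ⟨f, rfl, hfI⟩, rfl⟩

end Relators

section BoundedCounts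

variable {ι κ : Type*} [DecidableEq ι] {c : ι → ℕ}

theorem count_sum_replicate_of_injective [Fintype κ] {v : κ → ι} (hv : Function.Injective v)
    (n : κ → ℕ) (j : κ) : (∑ i, Multiset.replicate (n i) (v i)).count (v j) = n j := by
  classical
  simp [Multiset.count_sum', Multiset.count_replicate, hv.eq_iff]

theorem forall_count_le_iff_exists_sum_replicate {S : Multiset ι} :
    (∀ w, S.count w ≤ c w) ↔ ∃ (m : ℕ) (v : Fin m → ι) (n : Fin m → ℕ), Function.Injective v ∧
      ∑ i, Multiset.replicate (n i) (v i) = S ∧ ∀ i, n i ≤ c (v i) := by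
  constructor
  · intro hS
    let e := S.toFinset.equivFin.symm
    refine ⟨_, fun i ↦ e i, fun i ↦ S.count ↑(e i), Subtype.val_injective.comp e.injective, ?_,
      fun i ↦ hS (e i)⟩
    calc ∑ i, Multiset.replicate (S.count ↑(e i)) ↑(e i)
        = ∑ w : S.toFinset, Multiset.replicate (S.count ↑w) ↑w :=
          e.sum_comp fun w ↦ Multiset.replicate (S.count (w : ι)) (w : ι)
      _ = ∑ w ∈ S.toFinset, S.count w • {w} := by
          simp only [Multiset.nsmul_singleton,
            Finset.sum_coe_sort S.toFinset fun w ↦ Multiset.replicate (S.count w) w]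
      _ = S := S.toFinset_sum_count_nsmul_eq
  · rintro ⟨m, v, n, hv, rfl, hn⟩ w
    by_cases hw : w ∈ Set.range v
    · obtain ⟨j, rfl⟩ := hw
      exact (count_sum_replicate_of_injective hv n j).trans_le (hn j)
    · have count_eq_zero : (∑ i, Multiset.replicate (n i) (v i)).count w = 0 := by
        rw [Multiset.count_sum']
        exact Finset.sum_eq_zero fun i _ ↦ Multiset.count_eq_zero.2 fun hi ↦
          hw ⟨i, (Multiset.eq_of_mem_replicate hi).symm⟩
      exact count_eq_zero.trans_le (Nat.zero_le _)

theorem forall_count_le_iff_exists_nodup_map_fst {S : Multiset ι} :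
    (∀ w, S.count w ≤ c w) ↔ ∃ T : Multiset (ι × ℕ),
      T.map Prod.fst = S ∧ T.Nodup ∧ ∀ x ∈ T, x.2 < c x.1 := by
  constructor
  · intro hS
    refine ⟨S.toEnumFinset.val, S.map_toEnumFinset_fst, S.toEnumFinset.nodup, fun x hx ↦ ?_⟩
    exact ((S.mem_toEnumFinset x).1 hx).trans_le (hS x.1)
  · rintro ⟨T, rfl, hT, hTc⟩ w
    let copies : Finset (ι × ℕ) := ⟨T.filter fun x ↦ w = x.1, hT.filter _⟩
    have mem_copies {x : ι × ℕ} (hx : x ∈ copies) : x ∈ T ∧ w = x.1 := Multiset.mem_filter.1 hx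
    calc (T.map Prod.fst).count w
        = copies.card := Multiset.count_map ..
      _ ≤ (Finset.range (c w)).card := by
          refine Finset.card_le_card_of_injOn Prod.snd (fun x hx ↦ ?_) fun x hx y hy hxy ↦ ?_
          · obtain ⟨hxT, rfl⟩ := mem_copies hx
            exact Finset.mem_coe.2 (Finset.mem_range.2 (hTc x hxT))
          · exact Prod.ext ((mem_copies hx).2.symm.trans (mem_copies hy).2) hxy
      _ = c w := Finset.card_range _

end BoundedCounts

section Capacities

variable {β ι : Type*} [DecidableEq ι] {r : β → ι → Prop} {c : ι → ℕ} {F : Multiset β}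

theorem exists_matching_iff_exists_rel_count_le :
    (∃ P : Multiset (β × (ι × ℕ)), P.map Prod.fst = F ∧ (P.map Prod.snd).Nodup ∧
      ∀ p ∈ P, r p.1 p.2.1 ∧ p.2.2 < c p.2.1) ↔
    ∃ S : Multiset ι, Multiset.Rel r F S ∧ ∀ w, S.count w ≤ c w := by
  constructor
  · rintro ⟨P, rfl, hnodup, hP⟩
    refine ⟨(P.map Prod.snd).map Prod.fst, ?_, forall_count_le_iff_exists_nodup_map_fst.2
      ⟨_, rfl, hnodup, Multiset.forall_mem_map_iff.2 fun p hp ↦ (hP p hp).2⟩⟩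
    rw [Multiset.rel_map_right]
    exact rel_iff_exists_map_fst_map_snd.2 ⟨P, rfl, rfl, fun p hp ↦ (hP p hp).1⟩
  · rintro ⟨S, hFS, hS⟩
    obtain ⟨T, rfl, hT, hTc⟩ := forall_count_le_iff_exists_nodup_map_fst.1 hS
    rw [Multiset.rel_map_right] at hFS
    obtain ⟨P, hPF, rfl, hP⟩ := rel_iff_exists_map_fst_map_snd.1 hFS
    exact ⟨P, hPF, hT, fun p hp ↦ ⟨hP p hp, hTc p.2 (Multiset.mem_map_of_mem _ hp)⟩⟩

theorem exists_decomposition_iff_exists_rel_count_le :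
    (∃ (m : ℕ) (Fs : Fin m → Multiset β) (vs : Fin m → ι), Function.Injective vs ∧
      ∑ i, Fs i = F ∧ ∀ i, (∀ C ∈ Fs i, r C (vs i)) ∧ (Fs i).card ≤ c (vs i)) ↔
    ∃ S : Multiset ι, Multiset.Rel r F S ∧ ∀ w, S.count w ≤ c w := by
  constructor
  · rintro ⟨m, Fs, vs, hvs, hF, h⟩
    exact ⟨∑ i, Multiset.replicate (Fs i).card (vs i),
      rel_sum_right_iff.2 ⟨Fs, hF, fun i _ ↦ rel_replicate_right_iff.2 ⟨rfl, (h i).1⟩⟩,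
      forall_count_le_iff_exists_sum_replicate.2 ⟨m, vs, _, hvs, rfl, fun i ↦ (h i).2⟩⟩
  · rintro ⟨S, hFS, hS⟩
    obtain ⟨m, vs, n, hvs, rfl, hn⟩ := forall_count_le_iff_exists_sum_replicate.1 hS
    obtain ⟨Fs, hF, hFs⟩ := rel_sum_right_iff.1 hFS
    refine ⟨m, Fs, vs, hvs, hF, fun i ↦ ?_⟩
    obtain ⟨hcard, hmem⟩ := rel_replicate_right_iff.1 (hFs i (Finset.mem_univ i))
    exact ⟨hmem, hcard.trans_le (hn i)⟩

end Capacities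

/-- `F` admits a decomposition `F = F₁ + … + F_m` with pairwise distinct
variables `v₁, …, v_m` such that every clause of `Fᵢ` contains `vᵢ` and
`|D_{vᵢ}| > c(Fᵢ)`, iff the bipartite graph `B(F)` has a matching covering all
clause-nodes (i.e. iff `F` is matching satisfiable). -/
theorem matching_sat_iff_decomposition
    (hD : ∀ v, (D v).Nonempty) (F : Multiset (Clause D)) :
    (∃ (m : ℕ) (Fs : Fin m → Multiset (Clause D)) (vs : Fin m → V),
       Function.Injective vs ∧ (∑ i, Fs i) = F ∧
       ∀ i, (∀ C ∈ Fs i, vs i ∈ FinFn.vars C) ∧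
            Multiset.card (Fs i) < (D (vs i)).card) ↔
    MatchingSat F := by
  simp only [Nat.lt_iff_le_pred (hD _).card_pos]
  calc _ ↔ ∃ S : Multiset V, Multiset.Rel (fun C v ↦ v ∈ FinFn.vars C) F S ∧
          ∀ v, S.count v ≤ (D v).card - 1 := exists_decomposition_iff_exists_rel_count_le
    _ ↔ MatchingSat F := exists_matching_iff_exists_rel_count_le.symm

end GCLS
end

section
/- For every generalised multi-clause-set F: (1) the maximum of c(F') over all matching satisfiable sub-multisets F' of F equals c(F) − δ*(F); (2) F is matching satisfiable if and only if δ*(F) = 0. -/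
open scoped Classical

namespace GCLS

variable {V α : Type} [DecidableEq V] [DecidableEq α]

variable {D : V → Finset α}

/-!
A matching that covers the clauses of `F'` uses distinct copies of variables of `F'`, so a matching
satisfiable multi-clause-set has non-positive deficiency. If `F' ≤ F` is matching satisfiable and
`G ≤ F` is arbitrary, then `F' ∩ G` is matching satisfiable too, and `δ(G)` exceeds `δ(F' ∩ G) ≤ 0`
by at most `c(G) - c(F' ∩ G) ≤ c(F) - c(F')`; hence `c(F') ≤ c(F) - δ*(F)`. Conversely,
`δ(G) ≤ δ*(F)` for all `G ≤ F` is the marriage condition with defect `δ*(F)` for the family of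
neighbourhoods of the clause-nodes, so all but `δ*(F)` of these can be matched.
-/

section HallWithDefect

variable {ι β : Type*} [DecidableEq β]

lemma biUnion_disjSum_const {γ : Type*} [DecidableEq γ] {s : Finset ι} (hs : s.Nonempty)
    (t : ι → Finset β) (u : Finset γ) :
    s.biUnion (fun i => (t i).disjSum u) = (s.biUnion t).disjSum u := by
  ext (b | c)
  · simp
  · simpa using fun _ => hs.exists_mem

lemma exists_injective_of_card_le_card_biUnion_add [Fintype ι] {t : ι → Finset β} {d : ℕ}
    (hall : ∀ s : Finset ι, s.card ≤ (s.biUnion t).card + d) :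
    ∃ (S : Finset ι) (f : S → β), f.Injective ∧ (∀ i : S, f i ∈ t i) ∧
      Fintype.card ι ≤ S.card + d := by
  -- Adding the same `d` dummy elements to every `t i` removes the defect.
  have marriage (s : Finset ι) :
      s.card ≤ (s.biUnion fun i => (t i).disjSum (Finset.univ : Finset (Fin d))).card := by
    obtain rfl | hs := s.eq_empty_or_nonempty
    · simp
    · simpa [biUnion_disjSum_const hs] using hall s
  obtain ⟨f, f_inj, f_mem⟩ :=
    (Finset.all_card_le_biUnion_card_iff_exists_injective _).1 marriage
  let S : Finset ι := {i | (f i).isLeft}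
  have exists_left (i : S) : ∃ b ∈ t i, Sum.inl b = f i := by
    obtain ⟨b, hb⟩ := Sum.isLeft_iff.1 (Finset.mem_filter.1 i.2).2
    exact ⟨b, by simpa [hb] using f_mem i, hb.symm⟩
  have exists_right (i : ↥Sᶜ) : ∃ k, Sum.inr k = f i := by
    have not_left : ¬ (f i).isLeft := by simpa [S] using i.2
    obtain ⟨k, hk⟩ := Sum.isRight_iff.1 (Sum.not_isLeft.1 not_left)
    exact ⟨k, hk.symm⟩
  choose g g_mem inl_g using exists_left
  choose k inr_k using exists_right
  have g_inj : g.Injective := fun i j h =>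
    Subtype.ext (f_inj (by rw [← inl_g i, ← inl_g j, h]))
  have k_inj : k.Injective := fun i j h =>
    Subtype.ext (f_inj (by rw [← inr_k i, ← inr_k j, h]))
  have card_compl_le : Sᶜ.card ≤ d := by
    simpa only [Fintype.card_coe, Fintype.card_fin] using Fintype.card_le_of_injective k k_inj
  refine ⟨S, g, g_inj, g_mem, ?_⟩
  rw [← Finset.card_add_card_compl S]
  gcongr

end HallWithDefect

lemma exists_le_map_eq_of_le_map {β γ : Type*} {f : β → γ} {s : Multiset β} {t : Multiset γ}
    (h : t ≤ s.map f) : ∃ s' ≤ s, s'.map f = t := by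
  induction s, t using Quotient.inductionOn₂ with | _ l m => ?_
  obtain ⟨_, perm, sublist⟩ : m.Subperm (l.map f) := h
  obtain ⟨l', hl', rfl⟩ := List.sublist_map_iff.1 sublist
  exact ⟨l', hl'.subperm, Multiset.coe_eq_coe.2 perm⟩

section VariableNodes

omit [DecidableEq α]

/-- The variable-nodes of the clause–variable graph belonging to the variables in `W`: the pairs
`(v, k)` with `k < |D v| - 1`, as in `MatchingSat`. -/
def variableNodes (D : V → Finset α) (W : Finset V) : Finset (V × ℕ) :=
  W.biUnion fun v => {v} ×ˢ Finset.range ((D v).card - 1)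

lemma mem_variableNodes {W : Finset V} {x : V × ℕ} :
    x ∈ variableNodes D W ↔ x.1 ∈ W ∧ x.2 < (D x.1).card - 1 := by
  simp only [variableNodes, Finset.mem_biUnion, Finset.mem_product, Finset.mem_singleton,
    Finset.mem_range]
  grind

lemma variableNodes_mono {W W' : Finset V} (h : W ⊆ W') :
    variableNodes D W ⊆ variableNodes D W' :=
  Finset.biUnion_subset_biUnion_of_subset_left _ h

lemma variableNodes_biUnion {ι : Type*} (s : Finset ι) (W : ι → Finset V) :
    variableNodes D (s.biUnion W) = s.biUnion fun i => variableNodes D (W i) :=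
  Finset.biUnion_biUnion _ _ _

lemma card_variableNodes (W : Finset V) :
    (variableNodes D W).card = ∑ v ∈ W, ((D v).card - 1) := by
  have disjoint_copies : (W : Set V).PairwiseDisjoint
      fun v => ({v} : Finset V) ×ˢ Finset.range ((D v).card - 1) := fun v _ w _ hvw =>
    Finset.disjoint_product.2 (Or.inl (Finset.disjoint_singleton.2 hvw))
  rw [variableNodes, Finset.card_biUnion disjoint_copies]
  simp

lemma domain_nonempty_of_mem_vars {C : Clause D} {v : V} (hv : v ∈ FinFn.vars C) :
    (D v).Nonempty := by
  obtain ⟨l, hl, rfl⟩ := Finset.mem_image.1 hv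
  exact ⟨l.2, C.2.1 l hl⟩

end VariableNodes

lemma mem_mvars {F : Multiset (Clause D)} {v : V} :
    v ∈ mvars F ↔ ∃ C ∈ F, v ∈ FinFn.vars C := by
  simp [mvars, Finset.mem_sup]

lemma mvars_mono {F G : Multiset (Clause D)} (h : F ≤ G) : mvars F ⊆ mvars G :=
  Finset.sup_mono (Multiset.toFinset_subset.2 (Multiset.subset_of_le h))

lemma mvars_map {ι : Type*} (s : Finset ι) (C : ι → Clause D) :
    mvars (s.val.map C) = s.biUnion fun i => FinFn.vars (C i) := by
  ext v
  simp [mem_mvars]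

lemma delta_eq_card_sub_card_variableNodes (F : Multiset (Clause D)) :
    delta F = (Multiset.card F : ℤ) - (variableNodes D (mvars F)).card := by
  rw [delta, card_variableNodes, Nat.cast_sum]
  congr 1
  refine Finset.sum_congr rfl fun v hv => ?_
  obtain ⟨C, -, hvC⟩ := mem_mvars.1 hv
  rw [Nat.cast_pred (domain_nonempty_of_mem_vars hvC).card_pos]

lemma delta_sub_delta_le_of_le {F G : Multiset (Clause D)} (h : F ≤ G) :
    delta G - delta F ≤ (Multiset.card G : ℤ) - Multiset.card F := by
  have card_le := Finset.card_le_card (variableNodes_mono (D := D) (mvars_mono h))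
  rw [delta_eq_card_sub_card_variableNodes, delta_eq_card_sub_card_variableNodes]
  omega

lemma deltaStar_le_iff {F : Multiset (Clause D)} {k : ℤ} :
    deltaStar F ≤ k ↔ ∀ G ≤ F, delta G ≤ k := by
  simp [deltaStar]

lemma delta_le_deltaStar {F G : Multiset (Clause D)} (h : G ≤ F) : delta G ≤ deltaStar F :=
  deltaStar_le_iff.1 le_rfl G h

lemma deltaStar_nonneg (F : Multiset (Clause D)) : 0 ≤ deltaStar F := by
  simpa [delta, mvars] using delta_le_deltaStar (Multiset.zero_le F)

omit [DecidableEq α] in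
lemma matchingSat_map_of_injective {ι : Type*} [Fintype ι] (C : ι → Clause D) {f : ι → V × ℕ}
    (f_inj : f.Injective) (f_mem : ∀ i, f i ∈ variableNodes D (FinFn.vars (C i))) :
    MatchingSat (Finset.univ.val.map C) := by
  refine ⟨Finset.univ.val.map fun i => (C i, f i), ?_, ?_, ?_⟩
  · simp
  · rw [Multiset.map_map]
    exact Finset.univ.nodup.map f_inj
  · intro p hp
    obtain ⟨i, -, rfl⟩ := Multiset.mem_map.1 hp
    exact mem_variableNodes.1 (f_mem i)

namespace MatchingSat

omit [DecidableEq α] in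
lemma mono {F G : Multiset (Clause D)} (hG : MatchingSat G) (h : F ≤ G) : MatchingSat F := by
  obtain ⟨P, rfl, nodup, adj⟩ := hG
  obtain ⟨Q, hQP, hQ⟩ := exists_le_map_eq_of_le_map h
  exact ⟨Q, hQ, Multiset.nodup_of_le (Multiset.map_le_map hQP) nodup,
    fun p hp => adj p (Multiset.mem_of_le hQP hp)⟩

lemma delta_nonpos {F : Multiset (Clause D)} (hF : MatchingSat F) : delta F ≤ 0 := by
  obtain ⟨P, rfl, nodup, adj⟩ := hF
  have nodes_le : P.map Prod.snd ≤ (variableNodes D (mvars (P.map Prod.fst))).val := by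
    refine (Multiset.le_iff_subset nodup).2 fun x hx => ?_
    obtain ⟨p, hp, rfl⟩ := Multiset.mem_map.1 hx
    obtain ⟨mem_vars, lt_card⟩ := adj p hp
    exact mem_variableNodes.2
      ⟨mem_mvars.2 ⟨p.1, Multiset.mem_map_of_mem _ hp, mem_vars⟩, lt_card⟩
  have card_le := Multiset.card_le_card nodes_le
  rw [delta_eq_card_sub_card_variableNodes]
  simp only [Multiset.card_map, Finset.card_val] at card_le ⊢
  omega

lemma card_le_card_sub_deltaStar {F F' : Multiset (Clause D)} (h : F' ≤ F)
    (hF' : MatchingSat F') : (Multiset.card F' : ℤ) ≤ Multiset.card F - deltaStar F := by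
  suffices deltaStar F ≤ Multiset.card F - Multiset.card F' by omega
  refine deltaStar_le_iff.2 fun G hG => ?_
  have inter_nonpos : delta (F' ∩ G) ≤ 0 := (hF'.mono Multiset.inter_le_left).delta_nonpos
  have delta_sub_le := delta_sub_delta_le_of_le (Multiset.inter_le_right : F' ∩ G ≤ G)
  have union_le : Multiset.card (F' ∪ G) ≤ Multiset.card F :=
    Multiset.card_le_card (Multiset.union_le h hG)
  have union_add_inter := congrArg Multiset.card (Multiset.union_add_inter F' G)
  simp only [Multiset.card_add] at union_add_inter
  omega

end MatchingSat

section Family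

variable {ι : Type*} [Fintype ι] (C : ι → Clause D)

lemma card_le_card_biUnion_variableNodes_add_deltaStar (s : Finset ι) :
    (s.card : ℤ) ≤ (s.biUnion fun i => variableNodes D (FinFn.vars (C i))).card +
      deltaStar (Finset.univ.val.map C) := by
  have delta_le : delta (s.val.map C) ≤ deltaStar (Finset.univ.val.map C) :=
    delta_le_deltaStar (Multiset.map_le_map (Finset.val_le_iff.2 (Finset.subset_univ s)))
  rw [delta_eq_card_sub_card_variableNodes, mvars_map, variableNodes_biUnion,
    Multiset.card_map, Finset.card_val] at delta_le
  omega

lemma exists_finset_matchingSat_map :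
    ∃ S : Finset ι, MatchingSat (S.val.map C) ∧
      (Fintype.card ι : ℤ) ≤ S.card + deltaStar (Finset.univ.val.map C) := by
  obtain ⟨d, hd⟩ := Int.eq_ofNat_of_zero_le (deltaStar_nonneg (Finset.univ.val.map C))
  have hall (s : Finset ι) :
      s.card ≤ (s.biUnion fun i => variableNodes D (FinFn.vars (C i))).card + d := by
    have := card_le_card_biUnion_variableNodes_add_deltaStar C s
    omega
  obtain ⟨S, f, f_inj, f_mem, card_le⟩ := exists_injective_of_card_le_card_biUnion_add hall
  refine ⟨S, ?_, by omega⟩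
  rw [← Multiset.attach_map_val' S.val]
  exact matchingSat_map_of_injective _ f_inj f_mem

end Family

lemma exists_matchingSat_card_eq (F : Multiset (Clause D)) :
    ∃ F' ≤ F, MatchingSat F' ∧ (Multiset.card F' : ℤ) = Multiset.card F - deltaStar F := by
  obtain ⟨S, S_matchingSat, card_le⟩ := exists_finset_matchingSat_map fun C : F => (C : Clause D)
  rw [Multiset.map_univ_coe, Multiset.card_coe] at card_le
  have map_le : S.val.map (fun C : F => (C : Clause D)) ≤ F :=
    (Multiset.map_le_map (Finset.val_le_iff.2 (Finset.subset_univ S))).trans_eq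
      (Multiset.map_univ_coe F)
  refine ⟨_, map_le, S_matchingSat,
    le_antisymm (S_matchingSat.card_le_card_sub_deltaStar map_le) ?_⟩
  rw [Multiset.card_map, Finset.card_val]
  omega

/-- (1) the maximum of `c(F')` over all matching satisfiable
sub-multisets `F' ≤ F` equals `c(F) - δ*(F)`; (2) `F` is matching satisfiable iff
`δ*(F) = 0`. -/
theorem max_matching_sat_card_and_char
    (hD : ∀ v, (D v).Nonempty) (F : Multiset (Clause D)) :
    IsGreatest {k : ℤ | ∃ F' ≤ F, MatchingSat F' ∧ (Multiset.card F' : ℤ) = k}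
      ((Multiset.card F : ℤ) - deltaStar F) ∧
    (MatchingSat F ↔ deltaStar F = 0) := by
  obtain ⟨F', F'_le, F'_matchingSat, card_F'⟩ := exists_matchingSat_card_eq F
  refine ⟨⟨⟨F', F'_le, F'_matchingSat, card_F'⟩, ?_⟩, fun hF => ?_, fun hF => ?_⟩
  · rintro _ ⟨G, hG, G_matchingSat, rfl⟩
    exact G_matchingSat.card_le_card_sub_deltaStar hG
  · have card_le := hF.card_le_card_sub_deltaStar le_rfl
    have nonneg := deltaStar_nonneg F
    omega
  · obtain rfl : F' = F := Multiset.eq_of_le_of_card_le F'_le (by omega)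
    exact F'_matchingSat

end GCLS
end

section
/- For every satisfiable generalised multi-clause-set F there exists a partial assignment φ that satisfies F (i.e., φ*F is empty) and is matching-maximum for F. -/
open scoped Classical

namespace GCLS

variable {V α : Type} [DecidableEq V] [DecidableEq α]

variable {D : V → Finset α}

/-!
Fix a maximum matching `M₀` of `B(F)`, and among all pairs of a satisfying assignment `φ` and a
matching `M` of `B_φ(F)` take one for which `(|M|, |M ∩ M₀|)` is lexicographically largest. If
`|M| < |M₀|`, some edge `(c, w)` of `M₀` ends in a variable-node `w` not covered by `M`. Since `M`
is maximum in `B_φ(F)`, the theorem of Hall yields a set `T ∋ w` of variable-nodes all of whose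
`B_φ(F)`-neighbours are matched by `M` into `T`. Rematch `c` to `w`, and give the variables of `T`
new values satisfying every literal matched to them: a variable `v` has fewer than `|D v|` copies,
so the matched clauses cannot exclude all of its values. A clause which `φ` satisfied through `T` is
matched into `T`, hence still satisfied; `M` has not become smaller and has gained an edge of `M₀`.
-/

section BipartiteMatching

open Finset

variable {I N : Type*} {R : I → N → Prop} {M : Finset (I × N)}

/-- A matching of the bipartite graph with adjacency relation `R`, given by its finite set of
edges. -/
structure IsMatching (R : I → N → Prop) (M : Finset (I × N)) : Prop where
  adj : ∀ e ∈ M, R e.1 e.2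
  injOn_fst : Set.InjOn Prod.fst (M : Set (I × N))
  injOn_snd : Set.InjOn Prod.snd (M : Set (I × N))

/-- `T` is closed under `M`-alternating walks, and these never end in an unmatched left vertex:
every `R`-neighbour of `T` is matched by `M` into `T`. -/
def IsAlternatingClosed (R : I → N → Prop) (M : Finset (I × N)) (T : Finset N) : Prop :=
  ∀ i, ∀ t ∈ T, R i t → ∃ x ∈ T, (i, x) ∈ M

/-- The matching obtained from `M` by rematching `c` to `w`. -/
def rematch [DecidableEq I] [DecidableEq N] (M : Finset (I × N)) (c : I) (w : N) :
    Finset (I × N) :=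
  insert (c, w) {e ∈ M | e.1 ≠ c}

lemma isMatching_empty (R : I → N → Prop) : IsMatching R ∅ where
  adj := by simp
  injOn_fst := by simp
  injOn_snd := by simp

lemma IsMatching.imp {R' : I → N → Prop} (hM : IsMatching R M) (h : ∀ i x, R i x → R' i x) :
    IsMatching R' M where
  adj e he := h _ _ (hM.adj e he)
  injOn_fst := hM.injOn_fst
  injOn_snd := hM.injOn_snd

lemma IsMatching.card_le [Fintype I] (hM : IsMatching R M) : #M ≤ Fintype.card I :=
  card_le_card_of_injOn Prod.fst (fun _ _ ↦ mem_univ _) hM.injOn_fst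

lemma exists_isMatching_card_eq_of_injective {S : Finset N} {f : S → I}
    (hf : Function.Injective f) (hR : ∀ x : S, R (f x) x) :
    ∃ M : Finset (I × N), IsMatching R M ∧ #M = #S := by
  refine ⟨univ.map ⟨fun x : S ↦ (f x, (x : N)), fun x y h ↦ hf (congrArg Prod.fst h)⟩,
    ⟨?_, ?_, ?_⟩, by simp⟩
  · intro e he
    obtain ⟨x, -, rfl⟩ := mem_map.1 he
    exact hR x
  · rintro _ hx _ hy h
    obtain ⟨x, -, rfl⟩ := mem_map.1 hx
    obtain ⟨y, -, rfl⟩ := mem_map.1 hy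
    obtain rfl : x = y := hf h
    rfl
  · rintro _ hx _ hy h
    obtain ⟨x, -, rfl⟩ := mem_map.1 hx
    obtain ⟨y, -, rfl⟩ := mem_map.1 hy
    obtain rfl : x = y := Subtype.ext h
    rfl

lemma exists_mem_forall_snd_ne_of_card_lt {M' : Finset (I × N)}
    (hM' : Set.InjOn Prod.snd (M' : Set (I × N))) (h : #M < #M') :
    ∃ e ∈ M', ∀ d ∈ M, d.2 ≠ e.2 := by
  have hlt : #(M.image Prod.snd) < #(M'.image Prod.snd) :=
    card_image_le.trans_lt (h.trans_eq (card_image_of_injOn hM').symm)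
  obtain ⟨x, hx, hxM⟩ := exists_mem_notMem_of_card_lt_card hlt
  obtain ⟨e, he, rfl⟩ := mem_image.1 hx
  exact ⟨e, he, fun d hd hde ↦ hxM (mem_image.2 ⟨d, hd, hde⟩)⟩

/-- The only vertex of `T` that `M` may leave uncovered is `w`, so `M` matches at least `|T| - 1`
neighbours of `T` into `T`; if there are fewer than `|T|` neighbours, these are all of them. -/
lemma IsMatching.isAlternatingClosed_of_card_lt [Fintype I] [DecidableEq N]
    (hM : IsMatching R M) {w : N} {T : Finset N} (hT : T ⊆ insert w (M.image Prod.snd))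
    (hlt : #{i | ∃ t ∈ T, R i t} < #T) : w ∈ T ∧ IsAlternatingClosed R M T := by
  set nbrs : Finset I := {i | ∃ t ∈ T, R i t}
  set MT : Finset (I × N) := {e ∈ M | e.2 ∈ T}
  have hMT_fst : MT.image Prod.fst ⊆ nbrs := by
    intro i hi
    obtain ⟨e, he, rfl⟩ := mem_image.1 hi
    obtain ⟨heM, heT⟩ := mem_filter.1 he
    exact mem_filter.2 ⟨mem_univ _, e.2, heT, hM.adj e heM⟩
  have hcard : #(MT.image Prod.fst) = #MT :=
    card_image_of_injOn (hM.injOn_fst.mono (coe_subset.2 (filter_subset _ _)))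
  have herase : T.erase w ⊆ MT.image Prod.snd := by
    intro t ht
    obtain ⟨htw, htT⟩ := mem_erase.1 ht
    obtain ⟨e, he, rfl⟩ := mem_image.1 ((mem_insert.1 (hT htT)).resolve_left htw)
    exact mem_image_of_mem _ (mem_filter.2 ⟨he, htT⟩)
  have herase_card : #(T.erase w) ≤ #MT := (card_le_card herase).trans card_image_le
  have hMT_card : #MT ≤ #nbrs := hcard ▸ card_le_card hMT_fst
  have hwT : w ∈ T := by
    by_contra hwT
    rw [erase_eq_of_notMem hwT] at herase_card
    omega
  refine ⟨hwT, fun i t ht hit ↦ ?_⟩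
  have heq : MT.image Prod.fst = nbrs := by
    refine eq_of_subset_of_card_le hMT_fst ?_
    rw [card_erase_of_mem hwT] at herase_card
    omega
  have hi : i ∈ MT.image Prod.fst := heq ▸ mem_filter.2 ⟨mem_univ _, t, ht, hit⟩
  obtain ⟨⟨_, x⟩, he, rfl⟩ := mem_image.1 hi
  exact ⟨x, (mem_filter.1 he).2, (mem_filter.1 he).1⟩

theorem IsMatching.exists_isAlternatingClosed [Finite I] [DecidableEq N] (hM : IsMatching R M)
    (hmax : ∀ M₁, IsMatching R M₁ → #M₁ ≤ #M) {w : N} (hw : ∀ e ∈ M, e.2 ≠ w) :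
    ∃ T ⊆ insert w (M.image Prod.snd), w ∈ T ∧ IsAlternatingClosed R M T := by
  have := Fintype.ofFinite I
  set S := insert w (M.image Prod.snd) with hS
  have hScard : #S = #M + 1 := by
    rw [hS, card_insert_of_notMem (by simpa using fun i hi ↦ hw (i, w) hi rfl),
      card_image_of_injOn hM.injOn_snd]
  have hnot : ¬ ∃ f : S → I, Function.Injective f ∧ ∀ x : S, R (f x) x := by
    rintro ⟨f, hf, hR⟩
    obtain ⟨M₁, hM₁, hM₁card⟩ := exists_isMatching_card_eq_of_injective hf hR
    have := hmax M₁ hM₁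
    omega
  rw [← Fintype.all_card_le_filter_rel_iff_exists_injective (fun (x : S) i ↦ R i x)] at hnot
  push Not at hnot
  obtain ⟨A, hA⟩ := hnot
  have hAS : A.map (Function.Embedding.subtype _) ⊆ S := map_subtype_subset A
  exact ⟨_, hAS, hM.isAlternatingClosed_of_card_lt hAS (by simpa using hA)⟩

section Rematch

variable [DecidableEq I] [DecidableEq N] {c : I} {w : N}

lemma mem_rematch {e : I × N} : e ∈ rematch M c w ↔ e = (c, w) ∨ e ∈ M ∧ e.1 ≠ c := by
  simp [rematch]

lemma IsMatching.rematch (hM : IsMatching R M) (hcw : R c w) (hw : ∀ e ∈ M, e.2 ≠ w) :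
    IsMatching R (rematch M c w) where
  adj e he := by
    rcases mem_rematch.1 he with rfl | ⟨he, -⟩
    exacts [hcw, hM.adj e he]
  injOn_fst e he d hd hed := by
    rcases mem_rematch.1 he with rfl | ⟨he, hec⟩ <;> rcases mem_rematch.1 hd with rfl | ⟨hd, hdc⟩
    exacts [rfl, absurd hed.symm hdc, absurd hed hec, hM.injOn_fst he hd hed]
  injOn_snd e he d hd hed := by
    rcases mem_rematch.1 he with rfl | ⟨he, -⟩ <;> rcases mem_rematch.1 hd with rfl | ⟨hd, -⟩
    exacts [rfl, absurd hed.symm (hw d hd), absurd hed (hw e he), hM.injOn_snd he hd hed]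

lemma card_le_card_rematch (hM : Set.InjOn Prod.fst (M : Set (I × N))) :
    #M ≤ #(rematch M c w) := by
  have hcw : (c, w) ∉ ({e ∈ M | e.1 ≠ c} : Finset (I × N)) := by simp
  have hc : #{e ∈ M | e.1 = c} ≤ 1 := card_le_one.2 fun e he d hd ↦ by
    rw [mem_filter] at he hd
    exact hM he.1 hd.1 (he.2.trans hd.2.symm)
  have hsplit := card_filter_add_card_filter_not (s := M) (fun e ↦ e.1 = c)
  rw [rematch, card_insert_of_notMem hcw]
  lia

lemma card_inter_lt_card_rematch_inter {M' : Finset (I × N)}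
    (hM' : Set.InjOn Prod.fst (M' : Set (I × N))) (hcw : (c, w) ∈ M') (hw : ∀ e ∈ M, e.2 ≠ w) :
    #(M ∩ M') < #(rematch M c w ∩ M') := by
  refine card_lt_card ((ssubset_iff_of_subset fun e he ↦ ?_).2 ⟨(c, w), ?_, ?_⟩)
  · obtain ⟨heM, heM'⟩ := mem_inter.1 he
    have hec : e.1 ≠ c := fun hec ↦ hw e heM (congrArg Prod.snd (hM' heM' hcw hec))
    exact mem_inter.2 ⟨mem_rematch.2 (.inr ⟨heM, hec⟩), heM'⟩
  · exact mem_inter.2 ⟨mem_rematch.2 (.inl rfl), hcw⟩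
  · exact fun h ↦ hw _ (mem_inter.1 h).1 rfl

end Rematch

lemma exists_card_le_of_exchange {E : Type*} [DecidableEq E] {P : Finset E → Prop}
    {K : Finset E} (hP : ∃ M, P M)
    (step : ∀ M, P M → #M < #K →
      ∃ M₁, P M₁ ∧ toLex (#M, #(M ∩ K)) < toLex (#M₁, #(M₁ ∩ K))) :
    ∃ M, P M ∧ #K ≤ #M := by
  by_contra! hlt
  have hfin : ((fun M ↦ toLex (#M, #(M ∩ K))) '' {M | P M}).Finite := by
    refine (((Set.finite_Iic #K).prod (Set.finite_Iic #K)).image toLex).subset ?_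
    rintro _ ⟨M, hM, rfl⟩
    exact ⟨(#M, #(M ∩ K)), ⟨(hlt M hM).le, card_le_card inter_subset_right⟩, rfl⟩
  obtain ⟨M, hM, hmax⟩ := hfin.exists_maximalFor' _ _ hP
  obtain ⟨M₁, hM₁, hMM₁⟩ := step M hM (hlt M hM)
  exact (hmax hM₁ hMM₁.le).not_gt hMM₁

end BipartiteMatching

section MatchingNumber

variable {I β N : Type*} [Fintype I] {C : I → β}

/-- The maximum size of a matching between the elements of a multiset `F`, counted with
multiplicity, and vertices from `N`. A matching is encoded as a multiset of edges, as in `nu` and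
`nuSub`, which are the cases of the graphs `B(F)` and `B_φ(F)`. -/
noncomputable def matchingNumber (R : β → N → Prop) (F : Multiset β) : ℕ :=
  sSup {k | ∃ P : Multiset (β × N), P.map Prod.fst ≤ F ∧ (P.map Prod.snd).Nodup ∧
    (∀ p ∈ P, R p.1 p.2) ∧ Multiset.card P = k}

lemma exists_notMem_eq_of_cons_map_le {s : Finset I} {b : β}
    (h : b ::ₘ s.val.map C ≤ (Finset.univ : Finset I).val.map C) : ∃ i ∉ s, C i = b := by
  have hdisj : Disjoint s sᶜ := disjoint_compl_right
  rw [← Finset.union_compl s, ← Finset.disjUnion_eq_union _ _ hdisj, Finset.disjUnion_val,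
    Multiset.map_add, ← Multiset.singleton_add, add_comm, Multiset.add_le_add_iff_left,
    Multiset.singleton_le, Multiset.mem_map] at h
  simpa using h

lemma exists_finset_map_eq {P : Multiset (β × N)}
    (hP : P.map Prod.fst ≤ (Finset.univ : Finset I).val.map C) (hnd : (P.map Prod.snd).Nodup) :
    ∃ M : Finset (I × N), Set.InjOn Prod.fst (M : Set (I × N)) ∧
      Set.InjOn Prod.snd (M : Set (I × N)) ∧ M.val.map (fun e ↦ (C e.1, e.2)) = P := by
  induction P using Multiset.induction_on with
  | empty => exact ⟨∅, by simp⟩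
  | cons p P ih =>
    rw [Multiset.map_cons] at hP hnd
    obtain ⟨M, hfst, hsnd, rfl⟩ := ih ((Multiset.le_cons_self _ _).trans hP)
      (Multiset.nodup_cons.1 hnd).2
    have himage : (M.val.map fun e ↦ (C e.1, e.2)).map Prod.fst =
        (M.image Prod.fst).val.map C := by
      rw [Finset.image_val_of_injOn hfst]
      simp
    obtain ⟨i, hi, hip⟩ := exists_notMem_eq_of_cons_map_le (himage ▸ hP)
    have hp : p.2 ∉ M.image Prod.snd := by simpa using (Multiset.nodup_cons.1 hnd).1
    have hiM : (i, p.2) ∉ M := fun h ↦ hi (Finset.mem_image_of_mem Prod.fst h)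
    refine ⟨insert (i, p.2) M, ?_, ?_, ?_⟩
    · rw [Finset.coe_insert, Set.injOn_insert (by exact_mod_cast hiM)]
      exact ⟨hfst, by exact_mod_cast hi⟩
    · rw [Finset.coe_insert, Set.injOn_insert (by exact_mod_cast hiM)]
      exact ⟨hsnd, by exact_mod_cast hp⟩
    · rw [Finset.insert_val_of_notMem hiM, Multiset.map_cons, hip]

lemma exists_multiset_matching_iff {R : β → N → Prop} {k : ℕ} :
    (∃ P : Multiset (β × N), P.map Prod.fst ≤ (Finset.univ : Finset I).val.map C ∧
      (P.map Prod.snd).Nodup ∧ (∀ p ∈ P, R p.1 p.2) ∧ Multiset.card P = k) ↔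
    ∃ M : Finset (I × N), IsMatching (fun i ↦ R (C i)) M ∧ M.card = k := by
  constructor
  · rintro ⟨P, hP, hnd, hR, rfl⟩
    obtain ⟨M, hfst, hsnd, rfl⟩ := exists_finset_map_eq hP hnd
    exact ⟨M, ⟨fun e he ↦ hR _ (Multiset.mem_map_of_mem _ he), hfst, hsnd⟩, by simp⟩
  · rintro ⟨M, hM, rfl⟩
    refine ⟨M.val.map fun e ↦ (C e.1, e.2), ?_, ?_, ?_, by simp⟩
    · have hle : (M.image Prod.fst).val.map C ≤ (Finset.univ : Finset I).val.map C :=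
        Multiset.map_le_map (Finset.val_le_iff.2 (Finset.subset_univ _))
      rw [Finset.image_val_of_injOn hM.injOn_fst] at hle
      simpa using hle
    · rw [Multiset.map_map]
      exact M.nodup.map_on fun e he d hd ↦ hM.injOn_snd he hd
    · intro p hp
      obtain ⟨e, he, rfl⟩ := Multiset.mem_map.1 hp
      exact hM.adj e he

theorem isGreatest_matchingNumber (R : β → N → Prop) (C : I → β) :
    IsGreatest {k | ∃ M : Finset (I × N), IsMatching (fun i ↦ R (C i)) M ∧ M.card = k}
      (matchingNumber R ((Finset.univ : Finset I).val.map C)) := by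
  simp only [matchingNumber, exists_multiset_matching_iff]
  have hbdd : BddAbove {k | ∃ M : Finset (I × N), IsMatching (fun i ↦ R (C i)) M ∧ M.card = k} :=
    ⟨Fintype.card I, by rintro _ ⟨M, hM, rfl⟩; exact hM.card_le⟩
  exact ⟨Nat.sSup_mem ⟨0, ∅, isMatching_empty _, rfl⟩ hbdd, fun _ hk ↦ le_csSup hbdd hk⟩

end MatchingNumber

section Assignment

variable {φ ψ : PAssign D} {C : Clause D} {v : V}

/-- Adjacency of the clause `C` and the `x.2`-th copy of the variable `x.1` in `B(F)`. -/
def Adj (C : Clause D) (x : V × ℕ) : Prop :=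
  x.1 ∈ FinFn.vars C ∧ x.2 < (D x.1).card - 1

/-- Adjacency of the clause `C` and the `x.2`-th copy of the variable `x.1` in `B_φ(F)`. -/
def AdjSat (φ : PAssign D) (C : Clause D) (x : V × ℕ) : Prop :=
  x.2 < (D x.1).card - 1 ∧ EdgeSat φ C x.1

/-- The partial assignment with variables `W` mapping `v` to `f v`. -/
def ofFun (W : Finset V) (f : V → α) (hf : ∀ v ∈ W, f v ∈ D v) : PAssign D :=
  ⟨W.image fun v ↦ (v, f v), by simpa using hf, by
    simp only [Finset.mem_image]
    rintro _ ⟨v, -, rfl⟩ _ ⟨u, -, rfl⟩ (rfl : v = u)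
    rfl⟩

lemma vars_ofFun (W : Finset V) (f : V → α) (hf : ∀ v ∈ W, f v ∈ D v) :
    FinFn.vars (ofFun W f hf) = W := by
  simp [FinFn.vars, ofFun, Finset.image_image, Function.comp_def]

omit [DecidableEq α] in
lemma FinFn.mem_vars_iff {s : FinFn D} : v ∈ s.vars ↔ ∃ ε, (v, ε) ∈ s.1 := by
  simp [FinFn.vars]

lemma applyM_eq_zero_iff {F : Multiset (Clause D)} :
    applyM φ F = 0 ↔ ∀ C ∈ F, SatClause φ C := by
  simp [applyM, Multiset.filter_eq_nil]

omit [DecidableEq V] [DecidableEq α] in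
lemma satClause_iff_exists_edgeSat : SatClause φ C ↔ ∃ v, EdgeSat φ C v :=
  ⟨fun ⟨⟨v, ε⟩, hl, hφ⟩ ↦ ⟨v, ε, hl, hφ⟩, fun ⟨v, ε, hl, hφ⟩ ↦ ⟨(v, ε), hl, hφ⟩⟩

omit [DecidableEq α] in
lemma AdjSat.adj {x : V × ℕ} (h : AdjSat φ C x) : Adj C x :=
  ⟨FinFn.mem_vars_iff.2 (h.2.imp fun _ hε ↦ hε.1), h.1⟩

lemma EdgeSat.comp_left (h : EdgeSat φ C v) (hv : v ∉ FinFn.vars ψ) : EdgeSat (comp φ ψ) C v :=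
  let ⟨ε, hεC, δ, hδ, hne⟩ := h
  ⟨ε, hεC, δ, Finset.mem_union_right _ (Finset.mem_filter.2 ⟨hδ, hv⟩), hne⟩

lemma EdgeSat.comp_right (h : EdgeSat ψ C v) : EdgeSat (comp φ ψ) C v :=
  let ⟨ε, hεC, δ, hδ, hne⟩ := h
  ⟨ε, hεC, δ, Finset.mem_union_left _ hδ, hne⟩

end Assignment

section Exchange

omit [DecidableEq α]

variable {I : Type*} {C : I → Clause D} {M : Finset (I × (V × ℕ))}

/-- Distinct values excluded by the clauses matched to copies of `v` belong to distinct clauses,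
hence to distinct copies, of which there are only `|D v| - 1`. -/
lemma IsMatching.exists_value_ne (hM : IsMatching (fun i ↦ Adj (C i)) M) {v : V}
    (hv : (D v).Nonempty) :
    ∃ a ∈ D v, ∀ i k ε, (i, (v, k)) ∈ M → (v, ε) ∈ (C i).1 → a ≠ ε := by
  let Excludes (a : α) (k : ℕ) : Prop := ∃ i, (i, (v, k)) ∈ M ∧ (v, a) ∈ (C i).1
  let excluded : Finset α := {a ∈ D v | ∃ k, Excludes a k}
  have hle : excluded.card ≤ (Finset.range ((D v).card - 1)).card := by
    refine Finset.card_le_card_of_forall_subsingleton Excludes ?_ ?_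
    · intro a ha
      obtain ⟨-, k, i, hi, hia⟩ := Finset.mem_filter.1 ha
      exact ⟨k, Finset.mem_range.2 (hM.adj _ hi).2, i, hi, hia⟩
    · rintro k - a ⟨-, i, hi, hia⟩ b ⟨-, j, hj, hjb⟩
      obtain rfl : i = j := congrArg Prod.fst (hM.injOn_snd hi hj rfl)
      exact congrArg Prod.snd ((C i).2.2 _ hia _ hjb rfl)
  have hlt : excluded.card < (D v).card := by
    have := hv.card_pos
    rw [Finset.card_range] at hle
    omega
  obtain ⟨a, haD, ha⟩ := Finset.exists_mem_notMem_of_card_lt_card hlt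
  refine ⟨a, haD, ?_⟩
  rintro i k _ hi hia rfl
  exact ha (Finset.mem_filter.2 ⟨haD, k, i, hi, hia⟩)

lemma IsMatching.exists_assignment_edgeSat (hM : IsMatching (fun i ↦ Adj (C i)) M) (W : Finset V)
    (hD : ∀ v, (D v).Nonempty) :
    ∃ ψ : PAssign D, FinFn.vars ψ = W ∧ ∀ e ∈ M, e.2.1 ∈ W → EdgeSat ψ (C e.1) e.2.1 := by
  choose f hfD hf using fun v ↦ hM.exists_value_ne (hD v)
  refine ⟨ofFun W f fun v _ ↦ hfD v, vars_ofFun _ _ _, fun ⟨i, v, k⟩ he hv ↦ ?_⟩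
  obtain ⟨ε, hε⟩ := FinFn.mem_vars_iff.1 (hM.adj _ he).1
  exact ⟨ε, hε, f v, Finset.mem_image_of_mem _ hv, hf v i k ε he hε⟩

/-- `M` is a matching of `B_φ(F)` for some assignment `φ` satisfying `F`, where `F` is the
multi-clause-set given by the family `C`. -/
def HasSatisfyingAssignment (C : I → Clause D) (M : Finset (I × (V × ℕ))) : Prop :=
  ∃ φ : PAssign D, (∀ i, SatClause φ (C i)) ∧ IsMatching (fun i ↦ AdjSat φ (C i)) M

lemma hasSatisfyingAssignment_rematch [DecidableEq I] (hD : ∀ v, (D v).Nonempty) {φ : PAssign D}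
    (hφ : ∀ i, SatClause φ (C i)) (hM : IsMatching (fun i ↦ AdjSat φ (C i)) M)
    {c : I} {w : V × ℕ} (hcw : Adj (C c) w) (hw : ∀ e ∈ M, e.2 ≠ w) {T : Finset (V × ℕ)}
    (hTM : T ⊆ insert w (M.image Prod.snd)) (hwT : w ∈ T)
    (hT : IsAlternatingClosed (fun i ↦ AdjSat φ (C i)) M T) :
    HasSatisfyingAssignment C (rematch M c w) := by
  have hM₁ : IsMatching (fun i ↦ Adj (C i)) (rematch M c w) :=
    (hM.imp fun _ _ h ↦ h.adj).rematch hcw hw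
  obtain ⟨ψ, hψW, hψ⟩ := hM₁.exists_assignment_edgeSat (T.image Prod.fst) hD
  have hedge : ∀ e ∈ rematch M c w, EdgeSat (comp φ ψ) (C e.1) e.2.1 := by
    intro e he
    by_cases heW : e.2.1 ∈ T.image Prod.fst
    · exact (hψ e he heW).comp_right
    · rcases mem_rematch.1 he with rfl | ⟨heM, -⟩
      · exact absurd (Finset.mem_image_of_mem Prod.fst hwT) heW
      · exact (hM.adj e heM).2.comp_left (hψW ▸ heW)
  refine ⟨comp φ ψ, fun i ↦ satClause_iff_exists_edgeSat.2 ?_,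
    fun e he ↦ ⟨(hM₁.adj e he).2, hedge e he⟩, hM₁.injOn_fst, hM₁.injOn_snd⟩
  obtain ⟨v, hv⟩ := satClause_iff_exists_edgeSat.1 (hφ i)
  by_cases hvW : v ∈ T.image Prod.fst
  · obtain ⟨t, ht, rfl⟩ := Finset.mem_image.1 hvW
    have ht_lt : t.2 < (D t.1).card - 1 := by
      rcases Finset.mem_insert.1 (hTM ht) with rfl | htM
      · exact hcw.2
      · obtain ⟨e, he, rfl⟩ := Finset.mem_image.1 htM
        exact (hM.adj e he).1
    obtain ⟨x, -, hix⟩ := hT i t ht ⟨ht_lt, hv⟩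
    obtain ⟨y, hiy⟩ : ∃ y, (i, y) ∈ rematch M c w := by
      by_cases hic : i = c
      · exact ⟨w, mem_rematch.2 (.inl (by rw [hic]))⟩
      · exact ⟨x, mem_rematch.2 (.inr ⟨hix, hic⟩)⟩
    exact ⟨y.1, hedge _ hiy⟩
  · exact ⟨v, hv.comp_left (hψW ▸ hvW)⟩

lemma HasSatisfyingAssignment.exists_lex_lt [Finite I] [DecidableEq I]
    (hD : ∀ v, (D v).Nonempty) (hM : HasSatisfyingAssignment C M) {M' : Finset (I × (V × ℕ))}
    (hM' : IsMatching (fun i ↦ Adj (C i)) M') (hlt : M.card < M'.card) :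
    ∃ M₁, HasSatisfyingAssignment C M₁ ∧
      toLex (M.card, (M ∩ M').card) < toLex (M₁.card, (M₁ ∩ M').card) := by
  obtain ⟨φ, hφ, hM⟩ := hM
  by_cases hmax : ∀ M₁, IsMatching (fun i ↦ AdjSat φ (C i)) M₁ → M₁.card ≤ M.card
  · obtain ⟨⟨c, w⟩, hcw, hw⟩ := exists_mem_forall_snd_ne_of_card_lt hM'.injOn_snd hlt
    obtain ⟨T, hTM, hwT, hT⟩ := hM.exists_isAlternatingClosed hmax hw
    refine ⟨_, hasSatisfyingAssignment_rematch hD hφ hM (hM'.adj _ hcw) hw hTM hwT hT, ?_⟩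
    exact Prod.Lex.toLex_lt_toLex'.2 ⟨card_le_card_rematch hM.injOn_fst,
      fun _ ↦ card_inter_lt_card_rematch_inter hM'.injOn_fst hcw hw⟩
  · push Not at hmax
    obtain ⟨M₁, hM₁, hMM₁⟩ := hmax
    exact ⟨M₁, ⟨φ, hφ, hM₁⟩, Prod.Lex.toLex_lt_toLex.2 (.inl hMM₁)⟩

theorem exists_hasSatisfyingAssignment_card_le [Finite I] (hD : ∀ v, (D v).Nonempty)
    {φ : PAssign D} (hφ : ∀ i, SatClause φ (C i)) {M' : Finset (I × (V × ℕ))}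
    (hM' : IsMatching (fun i ↦ Adj (C i)) M') :
    ∃ M, HasSatisfyingAssignment C M ∧ M'.card ≤ M.card := by
  exact exists_card_le_of_exchange ⟨∅, φ, hφ, isMatching_empty _⟩
    fun _ hM hlt ↦ hM.exists_lex_lt hD hM' hlt

end Exchange

/-- every satisfiable multi-clause-set has a satisfying assignment
which is matching-maximum. -/
theorem exists_satisfying_matching_maximum
    (hD : ∀ v, (D v).Nonempty) (F : Multiset (Clause D)) (hsat : Sat F) :
    ∃ φ : PAssign D, applyM φ F = 0 ∧ MatchingMaximum φ F := by
  obtain ⟨I, _, C, rfl⟩ : ∃ (I : Type) (_ : Fintype I) (C : I → Clause D),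
      (Finset.univ : Finset I).val.map C = F :=
    ⟨F, inferInstance, (↑), F.map_univ_coe⟩
  have happly (φ : PAssign D) :
      applyM φ ((Finset.univ : Finset I).val.map C) = 0 ↔ ∀ i, SatClause φ (C i) := by
    simp [applyM_eq_zero_iff]
  obtain ⟨φ₀, hφ₀⟩ := hsat
  obtain ⟨⟨M', hM', hM'card⟩, hnu⟩ := isGreatest_matchingNumber Adj C
  obtain ⟨M, ⟨φ, hφ, hM⟩, hle⟩ :=
    exists_hasSatisfyingAssignment_card_le hD ((happly φ₀).1 hφ₀) hM'
  have hnuSub := isGreatest_matchingNumber (AdjSat φ) C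
  refine ⟨φ, (happly φ).2 hφ, le_antisymm (a := matchingNumber (AdjSat φ) _)
    (b := matchingNumber Adj _) ?_ ?_⟩
  · obtain ⟨M₁, hM₁, hM₁card⟩ := hnuSub.1
    exact hnu ⟨M₁, hM₁.imp fun _ _ h ↦ h.adj, hM₁card⟩
  · exact hM'card ▸ hle.trans (hnuSub.2 ⟨M, hM, rfl⟩)

end GCLS
end

section
/- For a generalised multi-clause-set F, the union (taking the maximum of multiplicities) and the intersection (taking the minimum of multiplicities) of any two tight sub-multisets of F are again tight sub-multisets of F. Consequently the tight sub-multisets of F form a lattice with a smallest and a largest element. -/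
open scoped Classical

namespace GCLS

variable {V α : Type} [DecidableEq V] [DecidableEq α]

variable {D : V → Finset α}

/-!
The deficiency is supermodular on the lattice of multi-clause-sets: the number of clauses is
modular, `mvars (A ∪ B) = mvars A ∪ mvars B`, and `mvars (A ∩ B) ⊆ mvars A ∩ mvars B`, where the
weights `|D v| - 1` are nonnegative since `D v` contains the value of any literal on `v`. The tight
sub-multisets of `F` are the maximisers of the deficiency on the interval below `F`, and the
maximisers of a supermodular function on a sublattice form a sublattice; here it is finite and
nonempty, so it has a least and a greatest element.
-/

section Order

variable {P L β : Type*}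

theorem exists_isGreatest_of_directedOn [Preorder P] {s : Set P} (hfin : s.Finite)
    (hne : s.Nonempty) (hdir : DirectedOn (· ≤ ·) s) : ∃ m, IsGreatest s m := by
  obtain ⟨m, hm⟩ := hfin.exists_maximal hne
  refine ⟨m, hm.prop, fun a ha ↦ ?_⟩
  obtain ⟨c, hc, hmc, hac⟩ := hdir m hm.prop a ha
  exact hac.trans (hm.le_of_ge hc hmc)

theorem exists_isLeast_of_directedOn [Preorder P] {s : Set P} (hfin : s.Finite)
    (hne : s.Nonempty) (hdir : DirectedOn (· ≥ ·) s) : ∃ m, IsLeast s m :=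
  exists_isGreatest_of_directedOn (P := Pᵒᵈ) hfin hne hdir

theorem isSublattice_Iic [Lattice L] (a : L) : IsSublattice (Set.Iic a) :=
  ⟨fun _ hb _ hc ↦ sup_le hb hc, (isLowerSet_Iic a).infClosed⟩

/-- Supermodularity of a function on a lattice: the property of the deficiency that makes its
maximisers closed under `⊔` and `⊓`. -/
def Supermodular [Lattice L] [Add β] [LE β] (f : L → β) : Prop :=
  ∀ a b, f a + f b ≤ f (a ⊔ b) + f (a ⊓ b)

theorem Supermodular.isSublattice_setOf_isMaxOn [Lattice L] [AddCommMonoid β] [PartialOrder β]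
    [IsOrderedCancelAddMonoid β] {f : L → β} (hf : Supermodular f) {s : Set L}
    (hs : IsSublattice s) : IsSublattice {a ∈ s | IsMaxOn f s a} where
  supClosed := by
    rintro a ⟨ha, ha_max⟩ b ⟨hb, hb_max⟩
    have h_inf : f (a ⊓ b) ≤ f b := hb_max (hs.infClosed ha hb)
    have h_sup : f a ≤ f (a ⊔ b) :=
      le_of_add_le_add_right ((hf a b).trans (add_le_add_right h_inf _))
    exact ⟨hs.supClosed ha hb, fun c hc ↦ (ha_max hc).trans h_sup⟩
  infClosed := by
    rintro a ⟨ha, ha_max⟩ b ⟨hb, hb_max⟩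
    have h_sup : f (a ⊔ b) ≤ f a := ha_max (hs.supClosed ha hb)
    have h_inf : f b ≤ f (a ⊓ b) :=
      le_of_add_le_add_left ((hf a b).trans (add_le_add_left h_sup _))
    exact ⟨hs.infClosed ha hb, fun c hc ↦ (hb_max hc).trans h_inf⟩

end Order

theorem mvars_union (A B : Multiset (Clause D)) : mvars (A ∪ B) = mvars A ∪ mvars B := by
  rw [mvars, Multiset.toFinset_union, Finset.sup_union, Finset.sup_eq_union, mvars, mvars]

theorem mvars_mono_s6 : Monotone (mvars : Multiset (Clause D) → Finset V) :=
  fun _ _ h ↦ Finset.sup_mono (Multiset.toFinset_subset.2 (Multiset.subset_of_le h))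

theorem mvars_inter_subset (A B : Multiset (Clause D)) : mvars (A ∩ B) ⊆ mvars A ∩ mvars B :=
  Finset.subset_inter (mvars_mono_s6 Multiset.inter_le_left) (mvars_mono_s6 Multiset.inter_le_right)

theorem domain_nonempty_of_mem_mvars {F : Multiset (Clause D)} {v : V} (hv : v ∈ mvars F) :
    (D v).Nonempty := by
  obtain ⟨C, -, hvC⟩ := Finset.mem_sup.1 hv
  obtain ⟨l, hl, rfl⟩ := Finset.mem_image.1 hvC
  exact ⟨l.2, C.2.1 l hl⟩

theorem sum_mvars_union_add_sum_mvars_inter_le (A B : Multiset (Clause D)) :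
    ∑ v ∈ mvars (A ∪ B), ((D v).card - 1 : ℤ) + ∑ v ∈ mvars (A ∩ B), ((D v).card - 1 : ℤ) ≤
      ∑ v ∈ mvars A, ((D v).card - 1 : ℤ) + ∑ v ∈ mvars B, ((D v).card - 1 : ℤ) := by
  rw [mvars_union, ← Finset.sum_union_inter (s₁ := mvars A)]
  refine add_le_add_right (Finset.sum_le_sum_of_subset_of_nonneg (mvars_inter_subset A B)
    fun v hv _ ↦ ?_) _
  have h_card_pos := (domain_nonempty_of_mem_mvars (Finset.mem_inter.1 hv).1).card_pos
  lia

theorem supermodular_delta : Supermodular (delta : Multiset (Clause D) → ℤ) := by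
  intro A B
  have h_card : (A ∪ B).card + (A ∩ B).card = A.card + B.card := by
    rw [← Multiset.card_add, Multiset.union_add_inter, Multiset.card_add]
  have h_sum := sum_mvars_union_add_sum_mvars_inter_le A B
  simp only [delta, Multiset.sup_eq_union, Multiset.inf_eq_inter]
  lia

theorem setOf_tight_eq (F : Multiset (Clause D)) :
    {F' | Tight F F'} = {F' ∈ Set.Iic F | IsMaxOn delta (Set.Iic F) F'} := by
  ext F'
  refine and_congr_right fun hF' ↦ ?_
  have h_le : delta F' ≤ deltaStar F := Finset.le_sup' delta (by simpa using hF')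
  rw [← h_le.ge_iff_eq, deltaStar, Finset.sup'_le_iff]
  simp [isMaxOn_iff]

theorem isSublattice_setOf_tight (F : Multiset (Clause D)) : IsSublattice {F' | Tight F F'} := by
  rw [setOf_tight_eq]
  exact supermodular_delta.isSublattice_setOf_isMaxOn (isSublattice_Iic F)

theorem finite_setOf_tight (F : Multiset (Clause D)) : {F' | Tight F F'}.Finite :=
  (Set.finite_Iic F).subset fun _ h ↦ h.1

theorem setOf_tight_nonempty (F : Multiset (Clause D)) : {F' | Tight F F'}.Nonempty := by
  obtain ⟨A, hA, h_eq⟩ := Finset.exists_mem_eq_sup' (powerset_toFinset_nonempty F) delta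
  exact ⟨A, by simpa using hA, h_eq.symm⟩

/-- union (max of multiplicities) and intersection (min of
multiplicities) of tight sub-multisets are tight; consequently the tight
sub-multisets form a lattice with a smallest and a largest element. -/
theorem tight_lattice
    (hD : ∀ v, (D v).Nonempty) (F : Multiset (Clause D)) :
    (∀ F₁ F₂, Tight F F₁ → Tight F F₂ →
        Tight F (F₁ ∪ F₂) ∧ Tight F (F₁ ∩ F₂)) ∧
    (∃ Fmin, Tight F Fmin ∧ ∀ F', Tight F F' → Fmin ≤ F') ∧
    (∃ Fmax, Tight F Fmax ∧ ∀ F', Tight F F' → F' ≤ Fmax) := by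
  have h_lattice := isSublattice_setOf_tight F
  obtain ⟨Fmin, hmin, hmin_le⟩ := exists_isLeast_of_directedOn (finite_setOf_tight F)
    (setOf_tight_nonempty F) h_lattice.infClosed.codirectedOn
  obtain ⟨Fmax, hmax, hle_max⟩ := exists_isGreatest_of_directedOn (finite_setOf_tight F)
    (setOf_tight_nonempty F) h_lattice.supClosed.directedOn
  exact ⟨fun _ _ h₁ h₂ ↦ ⟨h_lattice.supClosed h₁ h₂, h_lattice.infClosed h₁ h₂⟩,
    ⟨Fmin, hmin, fun _ h ↦ hmin_le h⟩, ⟨Fmax, hmax, fun _ h ↦ hle_max h⟩⟩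

end GCLS
end
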